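/- Let p be an odd prime and let n ≥ 0. The number of similarity classes of nondegenerate quadratic forms in 3 variables integral over ℤ_p whose discriminant ideal equals (pⁿ) is (n² + 3n + 2 + c)/3, where c = 1 if 3 divides n and c = 0 otherwise. (Via the correspondence between ternary forms and quaternion orders, this is the total number of isomorphism classes of ℤ_p-orders in quaternion algebras with reduced discriminant (pⁿ).) -/

import Mathlib

/-- The Gram matrix `M_f` of a quadratic form `f` in `n` variables. -/
noncomputable def gramMatrix {R : Type*} [CommRing R] {n : ℕ}
    (f : QuadraticForm R (Fin n → R)) : Matrix (Fin n) (Fin n) R :=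
  Matrix.of fun i j => QuadraticMap.polar f (Pi.single i 1) (Pi.single j 1)

/-- The ideal generated by the coefficients `a_{ij}` of a quadratic form
`f = Σ_{i ≤ j} a_{ij} X_i X_j`. -/
noncomputable def coeffIdeal {R : Type*} [CommRing R] {n : ℕ}
    (f : QuadraticForm R (Fin n → R)) : Ideal R :=
  Ideal.span ((Set.range fun i => f (Pi.single i 1)) ∪
    (Set.range fun ij : Fin n × Fin n =>
      QuadraticMap.polar f (Pi.single ij.1 1) (Pi.single ij.2 1)))

/-- A quadratic form is primitive if the ideal generated by its coefficients is the whole ring. -/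
noncomputable def IsPrimitiveForm {R : Type*} [CommRing R] {n : ℕ}
    (f : QuadraticForm R (Fin n → R)) : Prop :=
  coeffIdeal f = ⊤

/-- Two quadratic forms are similar if a unit multiple of one is isometric to the other. -/
def SimilarForm {R : Type*} [CommRing R] {n : ℕ}
    (f g : QuadraticForm R (Fin n → R)) : Prop :=
  ∃ u : Rˣ, ((u : R) • f).Equivalent g

/-!
Since `2` is a unit, a vector of minimal value splits off orthogonally, so up to similarity every
nondegenerate ternary form over `ℤ_p` is `u p^a X² + p^b Y² + v p^c Z²` with `a ≤ b ≤ c` and `u`,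
`v` units. The exponents are invariants. If `b < c`, reducing the leading coefficient of the
adjoint form modulo `p` detects the square class of `u`, and if `a < b`, the leading coefficient
and the determinant of the form detect that of `v`. If `b = c` or `a = b`, the corresponding square
class can be changed at will, because `α² u + β² v = 1` is solvable for units `u`, `v`.

Recording the two square classes as signs, the similarity classes correspond to the integer points
`(a, x, y)` with `a ≥ 0` and `3 a + 2 |x| + |y| = n`. Those with `a > 0` are the points for `n - 3`,
and those with `a = 0` lie on the boundary of a rhombus, which carries `2 n` integer points if
`n > 0`.
-/

open IsLocalRing QuadraticMap
open scoped Matrix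

section GramMatrix

variable {R : Type*} [CommRing R] {m n : ℕ} {f g : QuadraticForm R (Fin n → R)}

lemma gramMatrix_eq_toMatrix₂' (f : QuadraticForm R (Fin n → R)) :
    gramMatrix f = LinearMap.toMatrix₂' R f.polarBilin := by
  ext i j
  simp [gramMatrix]

lemma gramMatrix_comp (f : QuadraticForm R (Fin n → R)) (φ : (Fin m → R) →ₗ[R] Fin n → R) :
    gramMatrix (f.comp φ) = φ.toMatrix'ᵀ * gramMatrix f * φ.toMatrix' := by
  rw [gramMatrix_eq_toMatrix₂', gramMatrix_eq_toMatrix₂', polarBilin_comp,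
    LinearMap.toMatrix₂'_compl₁₂]

lemma gramMatrix_smul (u : R) (f : QuadraticForm R (Fin n → R)) :
    gramMatrix (u • f) = u • gramMatrix f := by
  ext i j
  exact polar_smul f u _ _

lemma gramMatrix_injective (h2 : IsRegular (2 : R)) :
    Function.Injective (gramMatrix : QuadraticForm R (Fin n → R) → _) := by
  intro f g hfg
  rw [gramMatrix_eq_toMatrix₂', gramMatrix_eq_toMatrix₂', EmbeddingLike.apply_eq_iff_eq] at hfg
  ext x
  have hx : polar f x x = polar g x x := LinearMap.congr_fun₂ hfg x x
  rw [polar_self, polar_self, two_smul, two_smul, ← two_mul, ← two_mul] at hx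
  exact h2.left hx

lemma exists_gramMatrix_eq_of_equivalent (h : f.Equivalent g) :
    ∃ P : Matrix (Fin n) (Fin n) R, IsUnit P.det ∧ gramMatrix f = Pᵀ * gramMatrix g * P := by
  obtain ⟨e⟩ := h
  refine ⟨LinearMap.toMatrix' e.toLinearEquiv.toLinearMap, ?_, ?_⟩
  · rw [LinearMap.det_toMatrix']
    exact e.toLinearEquiv.isUnit_det'
  · rw [← gramMatrix_comp]
    congr 1
    ext x
    exact (e.map_app x).symm

lemma equivalent_iff_exists_gramMatrix_eq (h2 : IsRegular (2 : R)) :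
    f.Equivalent g ↔
      ∃ P : Matrix (Fin n) (Fin n) R, IsUnit P.det ∧ gramMatrix f = Pᵀ * gramMatrix g * P := by
  refine ⟨exists_gramMatrix_eq_of_equivalent, fun ⟨P, hP, h⟩ => ?_⟩
  have hf : f = g.comp P.toLin' := by
    apply gramMatrix_injective h2
    rw [gramMatrix_comp, LinearMap.toMatrix'_toLin', h]
  exact ⟨{ P.toLinearEquiv' (P.invertibleOfIsUnitDet hP) with
    map_app' := fun x => (DFunLike.congr_fun hf x).symm }⟩

end GramMatrix

section WeightedSumSquares

lemma smul_weightedSumSquares {R ι : Type*} [CommRing R] [Fintype ι] (u : R) (w : ι → R) :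
    u • weightedSumSquares R w = weightedSumSquares R (u • w) := by
  ext x
  simp [Finset.mul_sum, mul_assoc]

lemma polar_weightedSumSquares {R ι : Type*} [CommRing R] [Fintype ι] (w x y : ι → R) :
    polar (weightedSumSquares R w) x y = ∑ i, 2 * w i * x i * y i := by
  simp only [polar, weightedSumSquares_apply, ← Finset.sum_sub_distrib]
  refine Finset.sum_congr rfl fun i _ => ?_
  simp only [Pi.add_apply, smul_eq_mul]
  ring

lemma exists_eq_sum_mul_sq_of_equivalent {R ι : Type*} [CommRing R] [Fintype ι]
    {w w' : ι → R} (h : (weightedSumSquares R w).Equivalent (weightedSumSquares R w')) (i : ι) :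
    ∃ q : ι → R, w i = ∑ j, w' j * q j ^ 2 := by
  classical
  obtain ⟨e⟩ := h
  refine ⟨e (Pi.single i 1), ?_⟩
  have hi := e.map_app (Pi.single i 1)
  simp only [weightedSumSquares_apply, smul_eq_mul, ← pow_two] at hi
  rw [hi]
  simp [Pi.single_apply]

variable {R : Type*} [CommRing R] {n : ℕ} {w w' : Fin n → R}

lemma gramMatrix_weightedSumSquares (w : Fin n → R) :
    gramMatrix (weightedSumSquares R w) = (2 : R) • Matrix.diagonal w := by
  ext i j
  rcases eq_or_ne i j with rfl | hij
  · simp [gramMatrix, polar_weightedSumSquares, Pi.single_apply]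
  · simp [gramMatrix, polar_weightedSumSquares, Pi.single_apply, hij, hij.symm]

lemma weightedSumSquares_equivalent_iff (h2 : IsRegular (2 : R)) :
    (weightedSumSquares R w).Equivalent (weightedSumSquares R w') ↔
      ∃ P : Matrix (Fin n) (Fin n) R, IsUnit P.det ∧
        Matrix.diagonal w = Pᵀ * Matrix.diagonal w' * P := by
  simp only [equivalent_iff_exists_gramMatrix_eq h2, gramMatrix_weightedSumSquares,
    Matrix.mul_smul, Matrix.smul_mul, h2.left.isSMulRegular.matrix.eq_iff]

-- The new weights are the diagonal entries of the adjugate matrices of the old diagonal ones.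
lemma weightedSumSquares_prod_erase_equivalent (h2 : IsRegular (2 : R))
    (h : (weightedSumSquares R w).Equivalent (weightedSumSquares R w')) :
    (weightedSumSquares R fun i => ∏ j ∈ Finset.univ.erase i, w j).Equivalent
      (weightedSumSquares R fun i => ∏ j ∈ Finset.univ.erase i, w' j) := by
  rw [weightedSumSquares_equivalent_iff h2] at h ⊢
  obtain ⟨P, hP, hPw⟩ := h
  refine ⟨P.adjugateᵀ, ?_, ?_⟩
  · rw [Matrix.det_transpose, Matrix.det_adjugate]
    exact hP.pow _
  · rw [← Matrix.adjugate_diagonal, ← Matrix.adjugate_diagonal, hPw, Matrix.adjugate_mul_distrib,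
      Matrix.adjugate_mul_distrib, ← Matrix.adjugate_transpose, Matrix.transpose_transpose,
      Matrix.mul_assoc]

end WeightedSumSquares

section SimilarForm

variable {R : Type*} [CommRing R] {n : ℕ} {f g k : QuadraticForm R (Fin n → R)}

lemma equivalent_smul (u : R) (h : f.Equivalent g) : (u • f).Equivalent (u • g) := by
  obtain ⟨e⟩ := h
  exact ⟨{ e.toLinearEquiv with map_app' := fun x => congrArg (u • ·) (e.map_app x) }⟩

namespace SimilarForm

lemma of_equivalent (h : f.Equivalent g) : SimilarForm f g :=
  ⟨1, by simpa using h⟩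

lemma refl (f : QuadraticForm R (Fin n → R)) : SimilarForm f f :=
  of_equivalent (.refl f)

lemma symm (h : SimilarForm f g) : SimilarForm g f := by
  obtain ⟨u, h⟩ := h
  refine ⟨u⁻¹, ?_⟩
  simpa [smul_smul] using equivalent_smul (↑u⁻¹ : R) h.symm

lemma trans (hfg : SimilarForm f g) (hgk : SimilarForm g k) : SimilarForm f k := by
  obtain ⟨u, hu⟩ := hfg
  obtain ⟨v, hv⟩ := hgk
  refine ⟨v * u, .trans ?_ hv⟩
  simpa [smul_smul] using equivalent_smul (v : R) hu

lemma equivalence : Equivalence (SimilarForm (R := R) (n := n)) :=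
  ⟨refl, symm, trans⟩

lemma span_det_gramMatrix_eq (h : SimilarForm f g) :
    Ideal.span {(gramMatrix f).det} = Ideal.span {(gramMatrix g).det} := by
  obtain ⟨u, h⟩ := h
  obtain ⟨P, hP, hPg⟩ := exists_gramMatrix_eq_of_equivalent h
  have hdet : (u : R) ^ n * (gramMatrix f).det = P.det ^ 2 * (gramMatrix g).det := by
    calc (u : R) ^ n * (gramMatrix f).det = (gramMatrix ((u : R) • f)).det := by
          rw [gramMatrix_smul, Matrix.det_smul, Fintype.card_fin]
      _ = P.det ^ 2 * (gramMatrix g).det := by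
          rw [hPg, Matrix.det_mul, Matrix.det_mul, Matrix.det_transpose]
          ring
  rw [← Ideal.span_singleton_mul_left_unit (u.isUnit.pow n), hdet,
    Ideal.span_singleton_mul_left_unit (hP.pow 2)]

end SimilarForm

end SimilarForm

section JordanDecomposition

variable {R M : Type*} [CommRing R] [IsDomain R] [AddCommGroup M] [Module R M]

lemma exists_basis_eq_cons_of_forall_dvd {k : ℕ} (φ : M →ₗ[R] R) {x : M} (hx : φ x ≠ 0)
    (hdvd : ∀ y, φ x ∣ φ y) (b : Module.Basis (Fin k) R (LinearMap.ker φ)) :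
    ∃ b' : Module.Basis (Fin (k + 1)) R M, (b' : Fin (k + 1) → M) = Fin.cons x ((↑) ∘ b) := by
  refine ⟨.mkFinCons x b (fun c y hy hc => ?_) fun z => ?_, Module.Basis.coe_mkFinCons _ _ _ _⟩
  · simpa [LinearMap.mem_ker.1 hy, hx] using congrArg φ hc
  · obtain ⟨c, hc⟩ := hdvd z
    refine ⟨-c, ?_⟩
    rw [LinearMap.mem_ker, map_add, map_smul, hc, smul_eq_mul]
    ring

variable [IsPrincipalIdealRing R] [ValuationRing R]

lemma exists_forall_apply_dvd (f : QuadraticForm R M) : ∃ x, ∀ y, f x ∣ f y := by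
  obtain ⟨-, ⟨x, rfl⟩, hx⟩ :=
    wellFounded_dvdNotUnit.has_min (Set.range f) (Set.range_nonempty f)
  refine ⟨x, fun y => by_contra fun hxy => ?_⟩
  exact hx (f y) ⟨y, rfl⟩
    (dvdNotUnit_of_dvd_of_not_dvd ((ValuationRing.dvd_total _ _).resolve_left hxy) hxy)

-- A vector of minimal value splits off, since half its polar form is integral against it.
lemma exists_orthogonal_basis_dvd [Module.Free R M] [Module.Finite R M] (h2 : IsUnit (2 : R))
    {k : ℕ} (hk : Module.finrank R M = k) (f : QuadraticForm R M) :
    ∃ b : Module.Basis (Fin k) R M, (Pairwise fun i j => polar f (b i) (b j) = 0) ∧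
      ∀ ⦃i j⦄, i ≤ j → f (b i) ∣ f (b j) := by
  induction k generalizing M with
  | zero => exact ⟨Module.finBasisOfFinrankEq R M hk, fun i => i.elim0, fun i => i.elim0⟩
  | succ k ih =>
    obtain ⟨x, hx⟩ := exists_forall_apply_dvd f
    by_cases hx0 : f x = 0
    · have hf : ∀ y, f y = 0 := fun y => zero_dvd_iff.1 (hx0 ▸ hx y)
      exact ⟨Module.finBasisOfFinrankEq R M hk, fun i j _ => by simp [polar, hf],
        fun i j _ => by simp [hf]⟩
    have hxx : f.polarBilin x x = 2 * f x := by simp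
    have hdvd (y : M) : f.polarBilin x x ∣ f.polarBilin x y := by
      rw [hxx, h2.mul_left_dvd]
      exact dvd_sub (dvd_sub (hx _) (hx _)) (hx _)
    have split {l : ℕ} := exists_basis_eq_cons_of_forall_dvd (k := l) (f.polarBilin x)
      (hxx ▸ mul_ne_zero h2.ne_zero hx0) hdvd
    have hker : Module.finrank R (LinearMap.ker (f.polarBilin x)) = k := by
      obtain ⟨b', -⟩ := split (Module.finBasis R _)
      simpa [hk] using (Module.finrank_eq_card_basis b').symm
    obtain ⟨b, hpolar, hchain⟩ := ih hker (f.comp (Submodule.subtype _))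
    obtain ⟨b', hb'⟩ := split b
    have hortho (i : Fin k) : polar f x (b i) = 0 := (b i).2
    refine ⟨b', fun i j hij => ?_, fun i j hij => ?_⟩
    · cases i using Fin.cases <;> cases j using Fin.cases
      · exact absurd rfl hij
      · simpa [hb'] using hortho _
      · simpa [hb', polar_comm f] using hortho _
      · simpa [hb', polar] using hpolar (ne_of_apply_ne Fin.succ hij)
    · cases i using Fin.cases
      · simpa [hb'] using hx _
      · cases j using Fin.cases
        · simp at hij
        · simpa [hb'] using hchain (Fin.succ_le_succ_iff.1 hij)

lemma exists_equivalent_weightedSumSquares_dvd (h2 : IsUnit (2 : R)) {n : ℕ}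
    (f : QuadraticForm R (Fin n → R)) :
    ∃ w : Fin n → R, f.Equivalent (weightedSumSquares R w) ∧ ∀ ⦃i j⦄, i ≤ j → w i ∣ w j := by
  obtain ⟨b, hortho, hdvd⟩ := exists_orthogonal_basis_dvd h2 (Module.finrank_fin_fun R) f
  let _ : Invertible (2 : R) := h2.invertible
  refine ⟨fun i => f (b i), ?_, hdvd⟩
  rw [← basisRepr_eq_of_iIsOrtho f b fun i j hij => ?_]
  · exact ⟨f.isometryEquivBasisRepr b⟩
  · have hij := hortho hij
    simp only [polar] at hij
    simp [Function.onFun, associated_apply, hij]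

end JordanDecomposition

section ResidueCharacter

variable {R : Type*} [CommRing R]

lemma ringChar_residueField_ne_two [IsLocalRing R] (h2 : IsUnit (2 : R)) :
    ringChar (ResidueField R) ≠ 2 := by
  refine mt (fun h => ?_) (h2.map (residue R)).ne_zero
  rw [map_ofNat]
  exact_mod_cast (ringChar.spec (ResidueField R) 2).2 h.dvd

lemma isSquare_iff_isSquare_residue [HenselianLocalRing R] (h2 : IsUnit (2 : R)) (u : Rˣ) :
    IsSquare u ↔ IsSquare (residue R u) := by
  refine ⟨fun h => (h.map (Units.coeHom R)).map (residue R), fun ⟨a, ha⟩ => ?_⟩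
  have hensel := (HenselianLocalRing.TFAE R).out 0 1 |>.1 ‹_›
  have ha0 : a ≠ 0 := fun h => (u.isUnit.map (residue R)).ne_zero (by rw [ha, h, zero_mul])
  obtain ⟨b, hb, -⟩ := hensel (.X ^ 2 - .C (u : R)) (Polynomial.monic_X_pow_sub_C _ two_ne_zero) a
    (by simp [ha, pow_two]) (by simp [ha0, one_add_one_eq_two, h2])
  have hub : (u : R) = b * b := by
    simpa [sub_eq_zero, pow_two, eq_comm] using hb
  obtain ⟨v, rfl⟩ : IsUnit b := isUnit_of_mul_isUnit_left (hub ▸ u.isUnit)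
  exact ⟨v, Units.ext hub⟩

lemma exists_mul_sq_add_mul_sq_eq_one [HenselianLocalRing R] [Finite (ResidueField R)]
    (h2 : IsUnit (2 : R)) (u v : Rˣ) : ∃ α β : R, u * α ^ 2 + v * β ^ 2 = 1 := by
  have := Fintype.ofFinite (ResidueField R)
  have hdeg : (.C (residue R v) * .X ^ 2 : Polynomial (ResidueField R)).degree = 2 :=
    Polynomial.degree_C_mul_X_pow 2 (v.isUnit.map _).ne_zero
  obtain ⟨a, b, hab⟩ := FiniteField.exists_root_sum_quadratic
    (f := .C (residue R u) * .X ^ 2) (g := .C (residue R v) * .X ^ 2 - .C 1)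
    (Polynomial.degree_C_mul_X_pow 2 (u.isUnit.map _).ne_zero)
    ((Polynomial.degree_sub_C (by rw [hdeg]; exact two_pos)).trans hdeg)
    (FiniteField.odd_card_of_char_ne_two (ringChar_residueField_ne_two h2))
  obtain ⟨α, rfl⟩ := residue_surjective a
  obtain ⟨β, rfl⟩ := residue_surjective b
  have hres : residue R (u * α ^ 2 + v * β ^ 2) = 1 := by
    simpa [← add_sub_assoc, sub_eq_zero] using hab
  obtain ⟨t, ht⟩ : IsUnit (u * α ^ 2 + v * β ^ 2) :=
    isUnit_of_map_unit (residue R) _ (hres ▸ isUnit_one)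
  obtain ⟨s, rfl⟩ := (isSquare_iff_isSquare_residue h2 t).2 (by simp [ht, hres])
  refine ⟨α * ↑s⁻¹, β * ↑s⁻¹, ?_⟩
  calc (u * (α * ↑s⁻¹) ^ 2 + v * (β * ↑s⁻¹) ^ 2 : R)
      = (u * α ^ 2 + v * β ^ 2) * (↑s⁻¹ * ↑s⁻¹) := by ring
    _ = ↑(s * s * (s⁻¹ * s⁻¹)) := by rw [← ht, Units.val_mul (s * s), Units.val_mul s⁻¹]
    _ = 1 := by rw [← mul_inv, mul_inv_cancel, Units.val_one]

section IsLocalRing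

variable [IsLocalRing R] [Finite (ResidueField R)]

variable (R) in
open scoped Classical in
/-- The quadratic character of the residue field, pulled back to the units of a local ring. -/
noncomputable def residueChar : Rˣ →* ℤˣ :=
  letI := Fintype.ofFinite (ResidueField R)
  (quadraticChar (ResidueField R)).toUnitHom.comp (Units.map (residue R).toMonoidHom)

lemma coe_residueChar [Fintype (ResidueField R)] [DecidableEq (ResidueField R)] (u : Rˣ) :
    (residueChar R u : ℤ) = quadraticChar (ResidueField R) (residue R u) := by
  rw [residueChar, MonoidHom.comp_apply, MulChar.coe_toUnitHom]
  congr!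

lemma exists_residueChar_eq_neg_one (h2 : IsUnit (2 : R)) : ∃ ε : Rˣ, residueChar R ε = -1 := by
  classical
  have := Fintype.ofFinite (ResidueField R)
  obtain ⟨a, ha⟩ := quadraticChar_exists_neg_one' (ringChar_residueField_ne_two h2)
  obtain ⟨ε, rfl⟩ := IsLocalRing.surjective_units_map_of_local_ringHom (residue R)
    residue_surjective inferInstance a
  exact ⟨ε, Units.ext ((coe_residueChar ε).trans ha)⟩

lemma residueChar_eq_one_iff {u : Rˣ} : residueChar R u = 1 ↔ IsSquare (residue R u) := by
  classical
  have := Fintype.ofFinite (ResidueField R)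
  rw [← quadraticChar_one_iff_isSquare (u.isUnit.map _).ne_zero, Units.ext_iff, coe_residueChar,
    Units.val_one]

end IsLocalRing

lemma exists_eq_mul_sq_of_residueChar_eq [HenselianLocalRing R] [Finite (ResidueField R)]
    (h2 : IsUnit (2 : R)) {u v : Rˣ} (h : residueChar R u = residueChar R v) :
    ∃ t : Rˣ, u = v * t ^ 2 := by
  rw [← div_eq_one, ← map_div, residueChar_eq_one_iff, ← isSquare_iff_isSquare_residue h2] at h
  obtain ⟨t, ht⟩ := h
  exact ⟨t, by rw [pow_two, ← ht, mul_div_cancel]⟩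

end ResidueCharacter

section JordanForm

variable {R : Type*} [CommRing R] {n : ℕ} {ϖ : R} {u u' : Fin n → Rˣ} {e e' : Fin n → ℕ}

/-- The diagonal quadratic form `∑ uᵢ ϖ ^ eᵢ Xᵢ²` with unit parts `uᵢ` and exponents `eᵢ`. -/
noncomputable def jordanForm (ϖ : R) (u : Fin n → Rˣ) (e : Fin n → ℕ) :
    QuadraticForm R (Fin n → R) :=
  weightedSumSquares R fun i => u i * ϖ ^ e i

lemma smul_jordanForm (t : Rˣ) (ϖ : R) (u : Fin n → Rˣ) (e : Fin n → ℕ) :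
    (t : R) • jordanForm ϖ u e = jordanForm ϖ (fun i => t * u i) e := by
  rw [jordanForm, smul_weightedSumSquares, jordanForm]
  congr 1
  ext i
  simp [mul_assoc]

lemma det_gramMatrix_jordanForm (ϖ : R) (u : Fin n → Rˣ) (e : Fin n → ℕ) :
    (gramMatrix (jordanForm ϖ u e)).det = 2 ^ n * (↑(∏ i, u i) * ϖ ^ ∑ i, e i) := by
  simp [jordanForm, gramMatrix_weightedSumSquares, Finset.prod_mul_distrib,
    Finset.prod_pow_eq_pow_sum]

lemma jordanForm_equivalent_of_mul_sq (ϖ : R) (e : Fin n → ℕ) (t : Fin n → Rˣ)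
    (h : ∀ i, u i = u' i * t i ^ 2) : (jordanForm ϖ u e).Equivalent (jordanForm ϖ u' e) :=
  ⟨QuadraticForm.isometryEquivWeightedSumSquaresWeightedSumSquares t fun i => by
    rw [h i, Units.val_mul, Units.val_pow_eq_pow_val]
    ring⟩

lemma jordanForm_comp_equivalent (ϖ : R) (u : Fin n → Rˣ) (e : Fin n → ℕ)
    (σ : Equiv.Perm (Fin n)) : (jordanForm ϖ (u ∘ σ) (e ∘ σ)).Equivalent (jordanForm ϖ u e) :=
  ⟨{ LinearEquiv.funCongrLeft R R σ.symm with
    map_app' := fun x => by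
      simp only [jordanForm, weightedSumSquares_apply]
      exact (Fintype.sum_equiv σ _ _ fun i => by simp [LinearMap.funLeft_apply]).symm }⟩

lemma jordanForm_adjoint_equivalent (h2 : IsRegular (2 : R))
    (h : (jordanForm ϖ u e).Equivalent (jordanForm ϖ u' e')) :
    (jordanForm ϖ (fun i => ∏ j ∈ Finset.univ.erase i, u j)
      (fun i => ∑ j ∈ Finset.univ.erase i, e j)).Equivalent
    (jordanForm ϖ (fun i => ∏ j ∈ Finset.univ.erase i, u' j)
      (fun i => ∑ j ∈ Finset.univ.erase i, e' j)) := by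
  simpa only [jordanForm, Finset.prod_mul_distrib, Finset.prod_pow_eq_pow_sum, Units.coe_prod] using
    weightedSumSquares_prod_erase_equivalent h2 h

section IsDomain

variable [IsDomain R]

lemma le_exponent_of_equivalent (hϖ : Irreducible ϖ) {m : ℕ}
    (h : (jordanForm ϖ u e).Equivalent (jordanForm ϖ u' e')) (hm : ∀ j, m ≤ e' j) (i : Fin n) :
    m ≤ e i := by
  obtain ⟨q, hq⟩ := exists_eq_sum_mul_sq_of_equivalent h i
  have hdvd : ϖ ^ m ∣ u i * ϖ ^ e i :=
    hq ▸ Finset.dvd_sum fun j _ => ((pow_dvd_pow ϖ (hm j)).mul_left _).mul_right _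
  exact (pow_dvd_pow_iff hϖ.ne_zero hϖ.not_isUnit).1 ((u i).isUnit.dvd_mul_left.1 hdvd)

variable [IsLocalRing R] [Finite (ResidueField R)]

lemma residueChar_apply_eq_of_equivalent (hϖ : Irreducible ϖ)
    (h : (jordanForm ϖ u e).Equivalent (jordanForm ϖ u' e')) {i : Fin n} (hi : e i = e' i)
    (hlt : ∀ j ≠ i, e' i < e' j) : residueChar R (u i) = residueChar R (u' i) := by
  obtain ⟨q, hq⟩ := exists_eq_sum_mul_sq_of_equivalent h i
  obtain ⟨r, hr⟩ : ϖ ^ (e' i + 1) ∣ ∑ j ∈ Finset.univ.erase i, u' j * ϖ ^ e' j * q j ^ 2 :=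
    Finset.dvd_sum fun j hj =>
      ((pow_dvd_pow ϖ (hlt j (Finset.ne_of_mem_erase hj))).mul_left _).mul_right _
  rw [← Finset.add_sum_erase _ _ (Finset.mem_univ i), hr, hi] at hq
  have hu : (u i : R) = u' i * q i ^ 2 + ϖ * r :=
    mul_right_cancel₀ (pow_ne_zero (e' i) hϖ.ne_zero) (by rw [hq]; ring)
  have hres : residue R ϖ = 0 := (residue_eq_zero_iff ϖ).2 hϖ.not_isUnit
  rw [← div_eq_one, ← map_div, residueChar_eq_one_iff]
  refine ⟨residue R (q i), ?_⟩
  rw [div_eq_inv_mul, Units.val_mul, hu, mul_add, ← mul_assoc, Units.inv_mul]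
  simp [hres, pow_two]

lemma residueChar_prod_eq_of_equivalent (h2 : IsRegular (2 : R)) (hϖ : Irreducible ϖ)
    (h : (jordanForm ϖ u e).Equivalent (jordanForm ϖ u' e')) (he : ∑ i, e i = ∑ i, e' i) :
    residueChar R (∏ i, u i) = residueChar R (∏ i, u' i) := by
  obtain ⟨P, ⟨d, hd⟩, hP⟩ := exists_gramMatrix_eq_of_equivalent h
  have hdet := congrArg Matrix.det hP
  rw [Matrix.det_mul, Matrix.det_mul, Matrix.det_transpose, det_gramMatrix_jordanForm,
    det_gramMatrix_jordanForm, ← hd, he] at hdet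
  have hprod : ∏ i, u i = (∏ i, u' i) * (d * d) := by
    refine Units.ext <| mul_left_cancel₀ (pow_ne_zero n h2.ne_zero) <|
      mul_right_cancel₀ (pow_ne_zero (∑ i, e' i) hϖ.ne_zero) ?_
    rw [mul_assoc, hdet, Units.val_mul (∏ i, u' i), Units.val_mul d]
    ring
  rw [hprod, map_mul, map_mul, Int.units_mul_self, mul_one]

end IsDomain

end JordanForm

section Ternary

lemma weightedSumSquares_rotate_equivalent {R : Type*} [CommRing R] (h2 : IsRegular (2 : R))
    (x z : R) {u v α β : R} (h : u * α ^ 2 + v * β ^ 2 = 1) :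
    (weightedSumSquares R ![z, x, u * v * x]).Equivalent
      (weightedSumSquares R ![z, u * x, v * x]) := by
  refine (weightedSumSquares_equivalent_iff h2).2
    ⟨!![1, 0, 0; 0, α, -(v * β); 0, β, u * α], ?_, ?_⟩
  · have hdet : α * (u * α) + v * β * β = 1 := by rw [← h]; ring
    simp [Matrix.det_fin_three, hdet]
  · have hdiag : ![z, x, u * v * x] =
        ![z, (u * α ^ 2 + v * β ^ 2) * x, u * v * (u * α ^ 2 + v * β ^ 2) * x] := by
      rw [h, one_mul, mul_one]
    rw [hdiag]
    ext i j
    fin_cases i <;> fin_cases j <;>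
      simp [Matrix.mul_apply, Fin.sum_univ_three, Matrix.diagonal_apply] <;> ring

lemma jordanForm_rev_equivalent {R : Type*} [CommRing R] (ϖ : R) (u₀ u₁ u₂ : Rˣ) (a b c : ℕ) :
    (jordanForm ϖ ![u₂, u₁, u₀] ![c, b, a]).Equivalent
      (jordanForm ϖ ![u₀, u₁, u₂] ![a, b, c]) := by
  convert jordanForm_comp_equivalent ϖ ![u₀, u₁, u₂] ![a, b, c] Fin.revPerm using 2 <;>
    ext i <;> fin_cases i <;> rfl

variable {R : Type*} [CommRing R] {ϖ : R}

lemma jordanForm_adjoint_fin_three_equivalent (h2 : IsRegular (2 : R)) {u u' : Fin 3 → Rˣ}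
    {a b c a' b' c' : ℕ}
    (h : (jordanForm ϖ u ![a, b, c]).Equivalent (jordanForm ϖ u' ![a', b', c'])) :
    (jordanForm ϖ ![u 1 * u 2, u 0 * u 2, u 0 * u 1] ![b + c, a + c, a + b]).Equivalent
      (jordanForm ϖ ![u' 1 * u' 2, u' 0 * u' 2, u' 0 * u' 1]
        ![b' + c', a' + c', a' + b']) := by
  have erase_zero : Finset.univ.erase (0 : Fin 3) = {1, 2} := rfl
  have erase_one : Finset.univ.erase (1 : Fin 3) = {0, 2} := rfl
  have erase_two : Finset.univ.erase (2 : Fin 3) = {0, 1} := rfl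
  convert jordanForm_adjoint_equivalent h2 h using 2 <;> ext i <;> fin_cases i <;>
    simp [erase_zero, erase_one, erase_two, -Finset.prod_erase_eq_div]

lemma exponents_le_of_similarForm [IsDomain R] (h2 : IsRegular (2 : R)) (hϖ : Irreducible ϖ)
    {u u' : Fin 3 → Rˣ} {a b c a' b' c' : ℕ} (hab' : a' ≤ b') (hbc' : b' ≤ c')
    (h : SimilarForm (jordanForm ϖ u ![a, b, c]) (jordanForm ϖ u' ![a', b', c'])) :
    a' ≤ a ∧ a' + b' ≤ a + b := by
  obtain ⟨t, h⟩ := h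
  rw [smul_jordanForm] at h
  constructor
  · refine le_exponent_of_equivalent hϖ h (fun j => ?_) 0
    fin_cases j <;> simp <;> lia
  · refine le_exponent_of_equivalent hϖ (jordanForm_adjoint_fin_three_equivalent h2 h)
      (fun j => ?_) 2
    fin_cases j <;> simp <;> lia

variable [HenselianLocalRing R] [Finite (ResidueField R)] (h2 : IsUnit (2 : R))

include h2

lemma jordanForm_rotate_equivalent (ϖ : R) (u v w : Rˣ) (a b : ℕ) :
    (jordanForm ϖ ![w, 1, u * v] ![a, b, b]).Equivalent (jordanForm ϖ ![w, u, v] ![a, b, b]) := by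
  obtain ⟨α, β, h⟩ := exists_mul_sq_add_mul_sq_eq_one h2 u v
  convert weightedSumSquares_rotate_equivalent h2.isRegular (ϖ ^ b) (w * ϖ ^ a) h using 1 <;>
    rw [jordanForm] <;> congr 1 <;> ext i <;> fin_cases i <;> simp

lemma similarForm_jordanForm_left (u u' v : Rˣ) {a b c : ℕ}
    (h : b ≠ c → residueChar R u = residueChar R u') :
    SimilarForm (jordanForm ϖ ![u, 1, v] ![a, b, c]) (jordanForm ϖ ![u', 1, v] ![a, b, c]) := by
  rcases eq_or_ne b c with rfl | hbc
  · have to_one (u : Rˣ) :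
        SimilarForm (jordanForm ϖ ![u, 1, v] ![a, b, b]) (jordanForm ϖ ![1, 1, v] ![a, b, b]) := by
      refine ⟨u, ?_⟩
      rw [smul_jordanForm]
      have hrot := (jordanForm_rotate_equivalent h2 ϖ u (u * v) (u * u) a b).symm
      have hsq : (jordanForm ϖ ![u * u, 1, u * (u * v)] ![a, b, b]).Equivalent
          (jordanForm ϖ ![1, 1, v] ![a, b, b]) :=
        jordanForm_equivalent_of_mul_sq ϖ _ ![u, 1, u] fun i => by
          fin_cases i <;> simp [pow_two, mul_comm, mul_left_comm]
      convert hrot.trans hsq using 2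
      ext i
      fin_cases i <;> simp
    exact (to_one u).trans (to_one u').symm
  · obtain ⟨t, rfl⟩ := exists_eq_mul_sq_of_residueChar_eq h2 (h hbc)
    exact .of_equivalent <| jordanForm_equivalent_of_mul_sq ϖ _ ![t, 1, 1] fun i => by
      fin_cases i <;> simp

lemma similarForm_jordanForm_right (u v v' : Rˣ) {a b c : ℕ}
    (h : a ≠ b → residueChar R v = residueChar R v') :
    SimilarForm (jordanForm ϖ ![u, 1, v] ![a, b, c]) (jordanForm ϖ ![u, 1, v'] ![a, b, c]) :=
  .trans (.of_equivalent (jordanForm_rev_equivalent ϖ v 1 u c b a)) <|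
    .trans (similarForm_jordanForm_left h2 v v' u fun hba => h hba.symm) <|
      .of_equivalent (jordanForm_rev_equivalent ϖ u 1 v' a b c)

lemma similarForm_jordanForm_iff [IsDomain R] (hϖ : Irreducible ϖ) {u v u' v' : Rˣ}
    {a b c : ℕ} (hab : a ≤ b) (hbc : b ≤ c) :
    SimilarForm (jordanForm ϖ ![u, 1, v] ![a, b, c]) (jordanForm ϖ ![u', 1, v'] ![a, b, c]) ↔
      (b ≠ c → residueChar R u = residueChar R u') ∧
        (a ≠ b → residueChar R v = residueChar R v') := by
  refine ⟨fun ⟨t, h⟩ => ?_, fun ⟨hu, hv⟩ =>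
    (similarForm_jordanForm_left h2 u u' v hu).trans (similarForm_jordanForm_right h2 u' v v' hv)⟩
  rw [smul_jordanForm] at h
  refine ⟨fun hne => ?_, fun hne => ?_⟩
  · have hadj := jordanForm_adjoint_fin_three_equivalent h2.isRegular h
    have hlead := residueChar_apply_eq_of_equivalent hϖ hadj (i := 2) rfl fun j hj => by
      fin_cases j <;> simp at hj ⊢ <;> lia
    have hsq : t * u * t = u * (t * t) := by rw [mul_right_comm, mul_comm]
    simpa [hsq, Int.units_mul_self] using hlead
  · have hlead := residueChar_apply_eq_of_equivalent hϖ h (i := 0) rfl fun j hj => by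
      fin_cases j <;> simp at hj ⊢ <;> lia
    have hdet := residueChar_prod_eq_of_equivalent h2.isRegular hϖ h rfl
    have hprod : residueChar R (t * u * (t * v * t)) = residueChar R (u' * v') := by
      simpa [Fin.prod_univ_three, mul_assoc, mul_comm v] using hdet
    have hsq : t * v * t = v * (t * t) := by rw [mul_right_comm, mul_comm]
    rw [map_mul, map_mul _ u', show residueChar R (t * u) = _ from hlead, hsq, map_mul _ v,
      map_mul, Int.units_mul_self, mul_one] at hprod
    exact mul_left_cancel hprod

end Ternary

section SignedExponents

/-- The integer points on the boundary of the rhombus `2 |x| + |y| ≤ m`. -/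
def rhombus (m : ℕ) : Set (ℤ × ℤ) :=
  {p | 2 * p.1.natAbs + p.2.natAbs = m}

lemma rhombus_zero : rhombus 0 = {0} := by
  ext ⟨x, y⟩
  simp [rhombus]

-- The points are numbered by `-m < k ≤ m` going once around the rhombus, starting from `(0, m)`
-- at `k = 0`.
lemma ncard_rhombus {m : ℕ} (hm : m ≠ 0) : (rhombus m).ncard = 2 * m := by
  let point (k : ℤ) : ℤ × ℤ :=
    (if 0 ≤ k then min k (m - k) else -min (-k) (m + k), m - 2 * k.natAbs)
  let index (p : ℤ × ℤ) : ℤ := if 0 ≤ p.1 then (m - p.2) / 2 else -((m - p.2) / 2)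
  have hinv : Set.InvOn index point (Set.Ioc (-m : ℤ) m) (rhombus m) := by
    constructor
    · intro k hk
      simp only [Set.mem_Ioc] at hk
      dsimp only [index, point]
      split_ifs <;> omega
    · rintro ⟨x, y⟩ (h : 2 * x.natAbs + y.natAbs = m)
      ext <;> dsimp only [index, point] <;> split_ifs <;> omega
  have hpoint : Set.MapsTo point (Set.Ioc (-m : ℤ) m) (rhombus m) := by
    rintro k ⟨hk₁, hk₂⟩
    simp only [rhombus, point, Set.mem_ofPred_eq]
    split_ifs <;> omega
  have hindex : Set.MapsTo index (rhombus m) (Set.Ioc (-m : ℤ) m) := by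
    rintro ⟨x, y⟩ (h : 2 * x.natAbs + y.natAbs = m)
    simp only [index, Set.mem_Ioc]
    split_ifs <;> omega
  rw [← (hinv.bijOn hpoint hindex).ncard_eq, ← Finset.coe_Ioc, Set.ncard_coe_finset, Int.card_Ioc]
  omega

/-- The integer points parametrizing the similarity classes with discriminant exponent `n`: the
point `(a, x, y)` encodes the exponents `a ≤ a + |x| ≤ a + |x| + |y|` of a Jordan form. The sign of
`x` records the class of its last unit and the sign of `y` that of its first unit; these classes
are invariants exactly when `x ≠ 0`, respectively `y ≠ 0`. -/
def signedExponents (n : ℕ) : Set (ℕ × ℤ × ℤ) :=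
  {t | 3 * t.1 + 2 * t.2.1.natAbs + t.2.2.natAbs = n}

lemma signedExponents_of_lt_three {n : ℕ} (hn : n < 3) :
    signedExponents n = Prod.mk 0 '' rhombus n := by
  ext ⟨a, x, y⟩
  simp only [signedExponents, rhombus, Set.mem_ofPred_eq, Set.mem_image, Prod.mk.injEq,
    exists_eq_right_right]
  omega

lemma signedExponents_add_three (n : ℕ) : signedExponents (n + 3) =
    Prod.map (· + 1) id '' signedExponents n ∪ Prod.mk 0 '' rhombus (n + 3) := by
  ext ⟨a, x, y⟩
  cases a
  · simp [signedExponents, rhombus]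
  · simp [signedExponents]
    omega

lemma ncard_signedExponents_of_lt_three {n : ℕ} (hn : n < 3) :
    (signedExponents n).ncard = (rhombus n).ncard := by
  rw [signedExponents_of_lt_three hn, Set.ncard_image_of_injective _ (Prod.mk_right_injective 0)]

lemma ncard_signedExponents_add_three {n : ℕ} (hfin : (signedExponents n).Finite) :
    (signedExponents (n + 3)).ncard = (signedExponents n).ncard + 2 * (n + 3) := by
  have hdisj : Disjoint (Prod.map (· + 1) id '' signedExponents n)
      (Prod.mk 0 '' rhombus (n + 3)) := by
    rw [Set.disjoint_left]
    rintro - ⟨t, -, rfl⟩ ⟨p, -, hp⟩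
    simpa using congrArg Prod.fst hp
  have hcard := ncard_rhombus (m := n + 3) (by lia)
  have hinj : Function.Injective (Prod.map (· + 1) id : ℕ × ℤ × ℤ → ℕ × ℤ × ℤ) :=
    (add_left_injective 1).prodMap Function.injective_id
  rw [signedExponents_add_three, Set.ncard_union_eq hdisj (hfin.image _)
    ((Set.finite_of_ncard_ne_zero (by lia)).image _), Set.ncard_image_of_injective _ hinj,
    Set.ncard_image_of_injective _ (Prod.mk_right_injective 0), hcard]

lemma three_mul_ncard_signedExponents (n : ℕ) :
    3 * (signedExponents n).ncard = n ^ 2 + 3 * n + 2 + if 3 ∣ n then 1 else 0 := by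
  induction n using Nat.strongRecOn with
  | ind n ih =>
    rcases n with - | - | - | n
    · simp [ncard_signedExponents_of_lt_three, rhombus_zero]
    · simp [ncard_signedExponents_of_lt_three, ncard_rhombus]
    · simp [ncard_signedExponents_of_lt_three, ncard_rhombus]
    · have hn := ih n (by lia)
      rw [ncard_signedExponents_add_three (Set.finite_of_ncard_ne_zero (by lia)), mul_add, hn]
      simp only [add_assoc, Nat.reduceAdd, Nat.dvd_add_self_right]
      ring

end SignedExponents

section DiscreteValuationRing

variable {R : Type*} [CommRing R] [IsDomain R] [IsDiscreteValuationRing R] {ϖ : R}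
  (h2 : IsUnit (2 : R)) (hϖ : Irreducible ϖ)

include h2 hϖ

lemma span_det_gramMatrix_jordanForm {n : ℕ} (u : Fin n → Rˣ) (e : Fin n → ℕ) :
    Ideal.span {(gramMatrix (jordanForm ϖ u e)).det} = maximalIdeal R ^ ∑ i, e i := by
  rw [det_gramMatrix_jordanForm, ← mul_assoc,
    Ideal.span_singleton_mul_left_unit ((h2.pow n).mul (Units.isUnit _)),
    hϖ.maximalIdeal_eq, Ideal.span_singleton_pow]

lemma exists_equivalent_jordanForm {n : ℕ} {f : QuadraticForm R (Fin n → R)}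
    (hf : (gramMatrix f).det ≠ 0) :
    ∃ (u : Fin n → Rˣ) (e : Fin n → ℕ), Monotone e ∧ f.Equivalent (jordanForm ϖ u e) := by
  obtain ⟨w, hfw, hdvd⟩ := exists_equivalent_weightedSumSquares_dvd h2 f
  have hw (i : Fin n) : w i ≠ 0 := by
    rintro hi
    have hspan := (SimilarForm.of_equivalent hfw).span_det_gramMatrix_eq
    rw [gramMatrix_weightedSumSquares, Matrix.det_smul, Matrix.det_diagonal,
      Finset.prod_eq_zero (Finset.mem_univ i) hi, mul_zero, Ideal.span_singleton_zero,
      Ideal.span_singleton_eq_bot] at hspan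
    exact hf hspan
  choose e u hw using fun i => IsDiscreteValuationRing.eq_unit_mul_pow_irreducible (hw i) hϖ
  refine ⟨u, e, fun i j hij => ?_, by rwa [jordanForm, ← funext hw]⟩
  have hij := hdvd hij
  rwa [hw, hw, Units.mul_left_dvd, Units.dvd_mul_left,
    pow_dvd_pow_iff hϖ.ne_zero hϖ.not_isUnit] at hij

lemma exists_similarForm_jordanForm {f : QuadraticForm R (Fin 3 → R)}
    (hf : (gramMatrix f).det ≠ 0) : ∃ (u v : Rˣ) (a b c : ℕ), a ≤ b ∧ b ≤ c ∧
      SimilarForm f (jordanForm ϖ ![u, 1, v] ![a, b, c]) := by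
  obtain ⟨u, e, he, hfu⟩ := exists_equivalent_jordanForm h2 hϖ hf
  refine ⟨u 1 * u 0, u 1 * u 2, e 0, e 1, e 2, he (by decide), he (by decide),
    .trans (.of_equivalent hfu) ⟨u 1, ?_⟩⟩
  rw [smul_jordanForm, show ![e 0, e 1, e 2] = e by ext i; fin_cases i <;> rfl]
  refine jordanForm_equivalent_of_mul_sq ϖ e ![1, u 1, 1] fun i => ?_
  fin_cases i <;> simp [pow_two]

end DiscreteValuationRing

section Representatives

variable {R : Type*} [CommRing R] {ϖ : R} {ε : Rˣ}

/-- The unit of which the sign of `z` records the residue character: `ε`, meant to be a nonsquare,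
for `z < 0` and `1` otherwise. -/
def signUnit (ε : Rˣ) (z : ℤ) : Rˣ :=
  if z < 0 then ε else 1

/-- The ternary form encoded by a point `(a, x, y)` of `signedExponents n`. -/
noncomputable def signedJordanForm (ϖ : R) (ε : Rˣ) (t : ℕ × ℤ × ℤ) :
    QuadraticForm R (Fin 3 → R) :=
  jordanForm ϖ ![signUnit ε t.2.2, 1, signUnit ε t.2.1]
    ![t.1, t.1 + t.2.1.natAbs, t.1 + t.2.1.natAbs + t.2.2.natAbs]

section ResidueCharacter

variable [IsLocalRing R] [Finite (ResidueField R)] (hε : residueChar R ε = -1)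

include hε

lemma eq_of_residueChar_signUnit_eq {z z' : ℤ} (habs : z.natAbs = z'.natAbs)
    (h : z ≠ 0 → residueChar R (signUnit ε z) = residueChar R (signUnit ε z')) : z = z' := by
  rcases eq_or_ne z 0 with rfl | hz
  · lia
  have hsign := h hz
  unfold signUnit at hsign
  split_ifs at hsign <;> simp [hε] at hsign <;> lia

lemma exists_natAbs_eq_residueChar_signUnit_eq (m : ℕ) (u : Rˣ) :
    ∃ z : ℤ, z.natAbs = m ∧ (m ≠ 0 → residueChar R u = residueChar R (signUnit ε z)) := by
  rcases Int.units_eq_one_or (residueChar R u) with hu | hu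
  · exact ⟨m, Int.natAbs_natCast m, fun _ => by simp [signUnit, hu, (Int.natCast_nonneg m).not_gt]⟩
  · exact ⟨-m, by simp, fun hm => by simp [signUnit, hu, hε, Nat.pos_of_ne_zero hm]⟩

end ResidueCharacter

lemma eq_of_similarForm_signedJordanForm [IsDomain R] [HenselianLocalRing R]
    [Finite (ResidueField R)] (h2 : IsUnit (2 : R)) (hϖ : Irreducible ϖ)
    (hε : residueChar R ε = -1) {n : ℕ} {t t' : ℕ × ℤ × ℤ} (ht : t ∈ signedExponents n)
    (ht' : t' ∈ signedExponents n)
    (h : SimilarForm (signedJordanForm ϖ ε t) (signedJordanForm ϖ ε t')) : t = t' := by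
  obtain ⟨a, x, y⟩ := t
  obtain ⟨a', x', y'⟩ := t'
  have ht : 3 * a + 2 * x.natAbs + y.natAbs = n := ht
  have ht' : 3 * a' + 2 * x'.natAbs + y'.natAbs = n := ht'
  simp only [signedJordanForm] at h
  have hle := exponents_le_of_similarForm h2.isRegular hϖ (by lia) (by lia) h
  have hge := exponents_le_of_similarForm h2.isRegular hϖ (by lia) (by lia) h.symm
  obtain rfl : a = a' := by lia
  have hx : x.natAbs = x'.natAbs := by lia
  have hy : y.natAbs = y'.natAbs := by lia
  rw [← hx, ← hy, similarForm_jordanForm_iff h2 hϖ (by lia) (by lia)] at h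
  rw [eq_of_residueChar_signUnit_eq hε hx fun hx0 => h.2 (by lia),
    eq_of_residueChar_signUnit_eq hε hy fun hy0 => h.1 (by lia)]

variable [IsDomain R] [IsDiscreteValuationRing R] (h2 : IsUnit (2 : R)) (hϖ : Irreducible ϖ)

include h2 hϖ

lemma span_det_gramMatrix_signedJordanForm {n : ℕ} {t : ℕ × ℤ × ℤ} (ht : t ∈ signedExponents n) :
    Ideal.span {(gramMatrix (signedJordanForm ϖ ε t)).det} = maximalIdeal R ^ n := by
  rw [signedJordanForm, span_det_gramMatrix_jordanForm h2 hϖ]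
  congr 1
  have ht : 3 * t.1 + 2 * t.2.1.natAbs + t.2.2.natAbs = n := ht
  simp [Fin.sum_univ_three]
  lia

variable [HenselianLocalRing R] [Finite (ResidueField R)] (hε : residueChar R ε = -1)

include hε

lemma exists_similarForm_signedJordanForm {n : ℕ} {f : QuadraticForm R (Fin 3 → R)}
    (hf : (gramMatrix f).det ≠ 0)
    (hspan : Ideal.span {(gramMatrix f).det} = maximalIdeal R ^ n) :
    ∃ t ∈ signedExponents n, SimilarForm f (signedJordanForm ϖ ε t) := by
  obtain ⟨u, v, a, b, c, hab, hbc, hfJ⟩ := exists_similarForm_jordanForm h2 hϖ hf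
  have hsum : a + b + c = n := by
    rw [hfJ.span_det_gramMatrix_eq, span_det_gramMatrix_jordanForm h2 hϖ] at hspan
    simpa [Fin.sum_univ_three] using (Ideal.pow_right_strictAnti _
      (IsDiscreteValuationRing.not_a_field R) (maximalIdeal.isMaximal R).ne_top).injective hspan
  obtain ⟨x, hx, hvx⟩ := exists_natAbs_eq_residueChar_signUnit_eq hε (b - a) v
  obtain ⟨y, hy, huy⟩ := exists_natAbs_eq_residueChar_signUnit_eq hε (c - b) u
  obtain rfl : b = a + x.natAbs := by lia
  obtain rfl : c = a + x.natAbs + y.natAbs := by lia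
  refine ⟨(a, x, y), ?_, hfJ.trans ?_⟩
  · change 3 * a + 2 * x.natAbs + y.natAbs = n
    lia
  · exact (similarForm_jordanForm_iff h2 hϖ hab hbc).2
      ⟨fun hne => huy (by lia), fun hne => hvx (by lia)⟩

end Representatives

theorem stmt_16_general {R : Type*} [CommRing R] [IsDomain R] [IsDiscreteValuationRing R]
    [HenselianLocalRing R] [Finite (ResidueField R)] (h2 : IsUnit (2 : R)) (n : ℕ) :
    Nat.card (Quot (fun (f g : {f : QuadraticForm R (Fin 3 → R) //
        (gramMatrix f).det ≠ 0 ∧ Ideal.span {(gramMatrix f).det} = maximalIdeal R ^ n}) =>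
      SimilarForm f.1 g.1)) = (n ^ 2 + 3 * n + 2 + if 3 ∣ n then 1 else 0) / 3 := by
  obtain ⟨ϖ, hϖ⟩ := IsDiscreteValuationRing.exists_irreducible R
  obtain ⟨ε, hε⟩ := exists_residueChar_eq_neg_one h2
  have hspan (t : signedExponents n) := span_det_gramMatrix_signedJordanForm (ε := ε) h2 hϖ t.2
  have hdet (t : signedExponents n) : (gramMatrix (signedJordanForm ϖ ε t)).det ≠ 0 := fun h =>
    pow_ne_zero n (IsDiscreteValuationRing.not_a_field R) <| by
      rw [← hspan t, h, Ideal.span_singleton_zero, Ideal.zero_eq_bot]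
  let form (t : signedExponents n) : {f : QuadraticForm R (Fin 3 → R) //
      (gramMatrix f).det ≠ 0 ∧ Ideal.span {(gramMatrix f).det} = maximalIdeal R ^ n} :=
    ⟨signedJordanForm ϖ ε t, hdet t, hspan t⟩
  have hbij : Function.Bijective fun t => Quot.mk (fun f g => SimilarForm f.1 g.1) (form t) := by
    refine ⟨fun t t' h => ?_, fun q => ?_⟩
    · rw [(SimilarForm.equivalence.comap Subtype.val).quot_mk_eq_iff] at h
      exact Subtype.ext (eq_of_similarForm_signedJordanForm h2 hϖ hε t.2 t'.2 h)
    · obtain ⟨f, hf, hfn⟩ := q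
      obtain ⟨t, ht, h⟩ := exists_similarForm_signedJordanForm h2 hϖ hε hf hfn
      exact ⟨⟨t, ht⟩, Quot.sound h.symm⟩
  rw [← Nat.card_congr (Equiv.ofBijective _ hbij), Nat.card_coe_set_eq]
  have := three_mul_ncard_signedExponents n
  lia

section Padic

variable {p : ℕ} [Fact p.Prime]

instance : HenselianLocalRing ℤ_[p] where
  is_henselian f hf a₀ h₁ h₂ :=
    HenselianRing.is_henselian (I := maximalIdeal ℤ_[p]) f hf a₀ h₁ (h₂.map _)

instance : Finite (ResidueField ℤ_[p]) :=
  Finite.of_equiv _ PadicInt.residueField.symm.toEquiv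

lemma isUnit_two_padicInt (hp : p ≠ 2) : IsUnit (2 : ℤ_[p]) := by
  have hdvd : ¬ (p : ℤ) ∣ 2 := by
    exact_mod_cast mt (Nat.prime_dvd_prime_iff_eq Fact.out Nat.prime_two).1 hp
  rw [← PadicInt.norm_int_lt_one_iff_dvd] at hdvd
  by_contra h
  exact hdvd (by exact_mod_cast PadicInt.not_isUnit_iff.1 h)

end Padic

theorem stmt_16 (p : ℕ) [Fact p.Prime] (hp : p ≠ 2) (n : ℕ) :
    Nat.card (Quot (fun (f g : {f : QuadraticForm ℤ_[p] (Fin 3 → ℤ_[p]) //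
        (gramMatrix f).det ≠ 0 ∧
          Ideal.span {(gramMatrix f).det} = Ideal.span {(p : ℤ_[p]) ^ n}}) =>
      SimilarForm f.1 g.1)) = (n ^ 2 + 3 * n + 2 + if 3 ∣ n then 1 else 0) / 3 := by
  rw [← Ideal.span_singleton_pow, ← PadicInt.maximalIdeal_eq_span_p]
  exact stmt_16_general (isUnit_two_padicInt hp) n
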